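/- Proposition 2.12(2): Let ω be a symplectic bilinear form on V and A a Lagrangian fanning frame, with horizontal frame H_i(t) = P_h(t)ȧ_i(t). Then the horizontal space h(t) = ker(Ḟ(t) − id_V) is a Lagrangian subspace of (V, ω) for every t; explicitly, ω(H_i(t), H_j(t)) = 0 for all i, j, and the vectors H_1(t), …, H_n(t) form a basis of h(t). -/

import Mathlib

/-!
Write `D = Ḟ(t)`. Since `F² = 0` along the curve, `D` anticommutes with `F`, and differentiating
`F a_i = 0` gives `D = -1` on the span of the `a_i`, which is both the kernel and the range of
`F`. Hence `F D = -D F = F`, so `D - 1` takes its values in the kernel of `F`, where `D` is `-1`,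
and `D² = 1`. Therefore `(1 + D) / 2` projects onto `ker (D - 1)` and kills the `a_i`, so that the
`H_i` span `ker (D - 1)`; they are independent because `F H_i = a_i`.

Differentiating `ω(a_i, a_j) = 0` shows that every `F(t)` is `ω`-skew. Skewness is a linear
condition, so it passes to `D`, and two vectors fixed by a skew endomorphism are orthogonal.
-/

section Algebra

/-- The fanning condition at one time, for a frame with value `a` and velocity `a'` there. -/
structure IsFanning (R : Type*) {ι V : Type*} [Ring R] [AddCommGroup V] [Module R V]
    (a a' : ι → V) : Prop where
  linearIndependent : LinearIndependent R (Sum.elim a a')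
  span_eq_top : Submodule.span R (Set.range (Sum.elim a a')) = ⊤

/-- `F` is the fundamental endomorphism of a fanning frame at a time where the frame has value `a`
and velocity `a'`. -/
structure IsFundamentalEnd {R ι V : Type*} [Ring R] [AddCommGroup V] [Module R V]
    (a a' : ι → V) (F : Module.End R V) : Prop extends IsFanning R a a' where
  map_frame : ∀ i, F (a i) = 0
  map_velocity : ∀ i, F (a' i) = a i

namespace IsFundamentalEnd

section Ring

variable {R ι V : Type*} [Ring R] [AddCommGroup V] [Module R V]
  {a a' : ι → V} {F D : Module.End R V}

theorem linearIndependent_frame (hF : IsFundamentalEnd a a' F) : LinearIndependent R a :=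
  hF.linearIndependent.comp Sum.inl Sum.inl_injective

theorem span_sup_span (hF : IsFundamentalEnd a a' F) :
    Submodule.span R (Set.range a) ⊔ Submodule.span R (Set.range a') = ⊤ := by
  rw [← Submodule.span_union, ← Set.Sum.elim_range, hF.span_eq_top]

theorem span_le_ker (hF : IsFundamentalEnd a a' F) :
    Submodule.span R (Set.range a) ≤ LinearMap.ker F :=
  Submodule.span_le.2 <| Set.range_subset_iff.2 hF.map_frame

theorem ker_eq_span (hF : IsFundamentalEnd a a' F) :
    LinearMap.ker F = Submodule.span R (Set.range a) := by
  have hF_comp : F ∘ a' = a := funext hF.map_velocity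
  have h_disj : Disjoint (Submodule.span R (Set.range a')) (LinearMap.ker F) :=
    Submodule.range_ker_disjoint (by rw [hF_comp]; exact hF.linearIndependent_frame)
  exact (eq_of_le_of_inf_le_of_sup_le hF.span_le_ker (h_disj.symm.eq_bot ▸ bot_le)
    (hF.span_sup_span ▸ le_top)).symm

theorem mul_self (hF : IsFundamentalEnd a a' F) : F * F = 0 :=
  LinearMap.ext_on_range hF.span_eq_top <| by
    rintro (i | i) <;> simp [hF.map_frame, hF.map_velocity]

theorem map_eq_neg_of_mem_ker (hF : IsFundamentalEnd a a' F) (hDa : ∀ i, D (a i) = -a i)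
    {v : V} (hv : v ∈ LinearMap.ker F) : D v = -v := by
  rw [hF.ker_eq_span] at hv
  exact LinearMap.eqOn_span (f := D) (g := -LinearMap.id) (by rintro _ ⟨i, rfl⟩; exact hDa i) hv

theorem mul_eq_self (hF : IsFundamentalEnd a a' F) (hDa : ∀ i, D (a i) = -a i)
    (hFD : F * D + D * F = 0) : F * D = F := by
  have hDF : D * F = -F := LinearMap.ext fun v =>
    hF.map_eq_neg_of_mem_ker hDa (LinearMap.congr_fun hF.mul_self v)
  rwa [hDF, add_neg_eq_zero] at hFD

theorem mul_self_eq_one (hF : IsFundamentalEnd a a' F) (hDa : ∀ i, D (a i) = -a i)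
    (hFD : F * D + D * F = 0) : D * D = 1 := by
  ext v
  have hFDv : F (D v) = F v := LinearMap.congr_fun (hF.mul_eq_self hDa hFD) v
  have h_neg : D (D v - v) = -(D v - v) :=
    hF.map_eq_neg_of_mem_ker hDa (by rw [LinearMap.mem_ker, map_sub, hFDv, sub_self])
  rwa [map_sub, neg_sub, sub_left_inj] at h_neg

end Ring

theorem isSkewAdjoint {R ι V W : Type*} [CommRing R] [AddCommGroup V] [Module R V]
    [AddCommGroup W] [Module R W] {a a' : ι → V} {F : Module.End R V} {ω : V →ₗ[R] V →ₗ[R] W}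
    (hF : IsFundamentalEnd a a' F) (hω : ∀ i j, ω (a i) (a j) = 0)
    (hω' : ∀ i j, ω (a i) (a' j) + ω (a' i) (a j) = 0) : ω.IsSkewAdjoint F := by
  suffices h : ω ∘ₗ F = ω.compl₂ (-F) from LinearMap.isAdjointPair_iff_comp_eq_compl₂.2 h
  refine LinearMap.ext_on_range hF.span_eq_top fun i =>
    LinearMap.ext_on_range hF.span_eq_top fun j => ?_
  rcases i with i | i <;> rcases j with j | j
  · simp [hF.map_frame]
  · simp [hF.map_frame, hF.map_velocity, hω]
  · simp [hF.map_frame, hF.map_velocity, hω]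
  · simpa [hF.map_velocity, ← eq_neg_iff_add_eq_zero] using hω' i j

end IsFundamentalEnd

section Projection

variable {K ι V W : Type*} [Field K] [AddCommGroup V] [Module K V]
  [AddCommGroup W] [Module K W] {a a' : ι → V} {F D : Module.End K V}

/-- The horizontal projection `P_h = (1 + D) / 2`, where `D` stands for the derivative of the
fundamental endomorphism. -/
def horizontalProjection (D : Module.End K V) : Module.End K V := (1 / 2 : K) • (1 + D)

theorem horizontalProjection_apply (D : Module.End K V) (v : V) :
    horizontalProjection D v = (1 / 2 : K) • (v + D v) := rfl

variable [NeZero (2 : K)]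

theorem one_half_smul_add_self (v : V) : (1 / 2 : K) • (v + v) = v := by
  rw [← two_smul K, smul_smul, one_div_mul_cancel two_ne_zero, one_smul]

theorem range_horizontalProjection (hD : D * D = 1) :
    LinearMap.range (horizontalProjection D) = LinearMap.ker (D - 1) := by
  apply le_antisymm
  · rintro _ ⟨v, rfl⟩
    have hDD : D (D v) = v := LinearMap.congr_fun hD v
    simp [horizontalProjection_apply, hDD, add_comm]
  · intro v hv
    have hDv : D v = v := sub_eq_zero.1 hv
    exact ⟨v, by rw [horizontalProjection_apply, hDv, one_half_smul_add_self]⟩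

theorem bilinear_eq_zero_of_isSkewAdjoint {ω : V →ₗ[K] V →ₗ[K] W} (hD : ω.IsSkewAdjoint D)
    {u v : V} (hu : u ∈ LinearMap.ker (D - 1)) (hv : v ∈ LinearMap.ker (D - 1)) : ω u v = 0 := by
  have hDu : D u = u := sub_eq_zero.1 hu
  have hDv : D v = v := sub_eq_zero.1 hv
  have h_eq_neg : ω u v = -ω u v := by
    simpa [hDu, hDv] using hD u v
  calc ω u v = (1 / 2 : K) • (ω u v + ω u v) := (one_half_smul_add_self _).symm
    _ = 0 := by rw [eq_neg_iff_add_eq_zero.1 h_eq_neg, smul_zero]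

namespace IsFundamentalEnd

theorem linearIndependent_horizontalProjection (hF : IsFundamentalEnd a a' F)
    (hDa : ∀ i, D (a i) = -a i) (hFD : F * D + D * F = 0) :
    LinearIndependent K (horizontalProjection D ∘ a') := by
  have hFDv (v : V) : F (D v) = F v := LinearMap.congr_fun (hF.mul_eq_self hDa hFD) v
  have h_comp : F ∘ horizontalProjection D ∘ a' = a := by
    ext i
    simp only [Function.comp_apply, horizontalProjection_apply, map_smul, map_add, hFDv,
      one_half_smul_add_self, hF.map_velocity]
  exact LinearIndependent.of_comp F (h_comp ▸ hF.linearIndependent_frame)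

theorem span_horizontalProjection (hF : IsFundamentalEnd a a' F)
    (hDa : ∀ i, D (a i) = -a i) (hFD : F * D + D * F = 0) :
    Submodule.span K (Set.range (horizontalProjection D ∘ a')) = LinearMap.ker (D - 1) := by
  have h_frame : Submodule.span K (Set.range a) ≤ LinearMap.ker (horizontalProjection D) :=
    Submodule.span_le.2 <| Set.range_subset_iff.2 fun i => by
      simp [horizontalProjection_apply, hDa]
  rw [← range_horizontalProjection (hF.mul_self_eq_one hDa hFD), LinearMap.range_eq_map,
    ← hF.span_sup_span, Submodule.map_sup, LinearMap.le_ker_iff_map.1 h_frame, bot_sup_eq,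
    Submodule.map_span, Set.range_comp]

end IsFundamentalEnd

end Projection

end Algebra

section Calculus

variable {𝕜 V W : Type*} [NontriviallyNormedField 𝕜] [NormedAddCommGroup V] [NormedSpace 𝕜 V]
  [NormedAddCommGroup W] [NormedSpace 𝕜 W]

theorem bilinear_add_eq_zero_of_hasDerivAt {E : Type*} [NormedAddCommGroup E] [NormedSpace 𝕜 E]
    (B : E →L[𝕜] V →L[𝕜] W) {f : 𝕜 → E} {g : 𝕜 → V} {f' : E} {g' : V} {t : 𝕜}
    (hf : HasDerivAt f f' t) (hg : HasDerivAt g g' t) (h : ∀ s, B (f s) (g s) = 0) :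
    B (f t) g' + B f' (g t) = 0 := by
  have h_deriv := B.hasDerivAt_of_bilinear (fun _ => hf) (fun _ => hg)
  simp only [h] at h_deriv
  exact h_deriv.unique (hasDerivAt_const t 0)

theorem isSkewAdjoint_of_hasDerivAt {ω : V →L[𝕜] V →L[𝕜] W} {F : 𝕜 → V →L[𝕜] V}
    {F' : V →L[𝕜] V} {t : 𝕜} (hF : ∀ s, ω.toLinearMap₁₂.IsSkewAdjoint (F s))
    (hFd : HasDerivAt F F' t) : ω.toLinearMap₁₂.IsSkewAdjoint F' := by
  intro u v
  have h_apply (w : V) : HasDerivAt (fun s => F s w) (F' w) t := by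
    simpa using hFd.clm_apply (hasDerivAt_const t w)
  have h_left : HasDerivAt (fun s => ω (F s u) v) (ω (F' u) v) t :=
    (ω.flip v).hasFDerivAt.comp_hasDerivAt t (h_apply u)
  have h_right : HasDerivAt (fun s => ω u (-F s v)) (ω u (-F' v)) t :=
    (ω u).hasFDerivAt.comp_hasDerivAt t (h_apply v).neg
  exact h_left.unique (h_right.congr_of_eventuallyEq (.of_forall fun s => hF s u v))

namespace IsFundamentalEnd

variable {ι : Type*} {A A' : 𝕜 → ι → V} {F : 𝕜 → V →L[𝕜] V} {F' : V →L[𝕜] V} {t : 𝕜}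

theorem deriv_apply_frame (hF : ∀ s, IsFundamentalEnd (A s) (A' s) (F s).toLinearMap)
    (hA' : ∀ i, HasDerivAt (fun s => A s i) (A' t i) t) (hFd : HasDerivAt F F' t) (i : ι) :
    F' (A t i) = -A t i := by
  have h_leibniz : F t (A' t i) + F' (A t i) = 0 :=
    bilinear_add_eq_zero_of_hasDerivAt (.id 𝕜 (V →L[𝕜] V)) hFd (hA' i) fun s => (hF s).map_frame i
  have h_velocity : F t (A' t i) = A t i := (hF t).map_velocity i
  rw [h_velocity] at h_leibniz
  exact eq_neg_of_add_eq_zero_right h_leibniz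

theorem mul_deriv_add_deriv_mul (hF : ∀ s, IsFundamentalEnd (A s) (A' s) (F s).toLinearMap)
    (hFd : HasDerivAt F F' t) :
    (F t).toLinearMap * F'.toLinearMap + F'.toLinearMap * (F t).toLinearMap = 0 := by
  have h_sq (s : 𝕜) : F s ∘L F s = 0 := ContinuousLinearMap.coe_injective (hF s).mul_self
  exact congrArg ContinuousLinearMap.toLinearMap
    (bilinear_add_eq_zero_of_hasDerivAt (.compL 𝕜 V V V) hFd hFd h_sq)

theorem isSkewAdjoint_deriv (hF : ∀ s, IsFundamentalEnd (A s) (A' s) (F s).toLinearMap)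
    (hA' : ∀ i s, HasDerivAt (fun r => A r i) (A' s i) s) (hFd : HasDerivAt F F' t)
    {ω : V →L[𝕜] V →L[𝕜] W} (hω : ∀ s i j, ω (A s i) (A s j) = 0) :
    ω.toLinearMap₁₂.IsSkewAdjoint F' :=
  isSkewAdjoint_of_hasDerivAt (fun s => (hF s).isSkewAdjoint (hω s) fun i j =>
    bilinear_add_eq_zero_of_hasDerivAt ω (hA' i s) (hA' j s) fun r => hω r i j) hFd

end IsFundamentalEnd

theorem prop2_12_part2_general [NeZero (2 : 𝕜)] {ι : Type*} (ω : V →L[𝕜] V →L[𝕜] W)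
    (A A' : 𝕜 → ι → V)
    (hA' : ∀ i t, HasDerivAt (fun s => A s i) (A' t i) t)
    (hIso : ∀ t i j, ω (A t i) (A t j) = 0)
    (F F' : 𝕜 → V →L[𝕜] V)
    (hF : ∀ t, IsFundamentalEnd (A t) (A' t) (F t).toLinearMap)
    (hFd : ∀ t, HasDerivAt F (F' t) t)
    (H : 𝕜 → ι → V)
    (hH : ∀ t i, H t i = (1 / 2 : 𝕜) • (A' t i + F' t (A' t i))) :
    ∀ t, (∀ i j, ω (H t i) (H t j) = 0) ∧
      LinearIndependent 𝕜 (H t) ∧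
      Submodule.span 𝕜 (Set.range (H t)) =
        LinearMap.ker (F' t - ContinuousLinearMap.id 𝕜 V).toLinearMap ∧
      (∀ u ∈ LinearMap.ker (F' t - ContinuousLinearMap.id 𝕜 V).toLinearMap,
        ∀ v ∈ LinearMap.ker (F' t - ContinuousLinearMap.id 𝕜 V).toLinearMap, ω u v = 0) := by
  intro t
  have hDa := IsFundamentalEnd.deriv_apply_frame hF (hA' · t) (hFd t)
  have hFD := IsFundamentalEnd.mul_deriv_add_deriv_mul hF (hFd t)
  have hskew := IsFundamentalEnd.isSkewAdjoint_deriv hF hA' (hFd t) hIso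
  have hH_eq : H t = horizontalProjection (F' t).toLinearMap ∘ A' t := funext (hH t)
  have h_indep : LinearIndependent 𝕜 (H t) :=
    hH_eq ▸ (hF t).linearIndependent_horizontalProjection hDa hFD
  have h_span : Submodule.span 𝕜 (Set.range (H t)) = LinearMap.ker ((F' t).toLinearMap - 1) :=
    hH_eq ▸ (hF t).span_horizontalProjection hDa hFD
  have h_mem (i : ι) : H t i ∈ LinearMap.ker ((F' t).toLinearMap - 1) :=
    h_span ▸ Submodule.subset_span ⟨i, rfl⟩
  exact ⟨fun i j => bilinear_eq_zero_of_isSkewAdjoint hskew (h_mem i) (h_mem j), h_indep, h_span,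
    fun _ hu _ hv => bilinear_eq_zero_of_isSkewAdjoint hskew hu hv⟩

end Calculus

/-- **Proposition 2.12(2).**  If `ω` is a symplectic bilinear form on `V` and `A` a
Lagrangian fanning frame with horizontal frame `H_i(t) = P_h(t) ȧ_i(t)`, then the
horizontal space `h(t) = ker(Ḟ(t) − id)` is Lagrangian for every `t`: explicitly,
`ω(H_i(t), H_j(t)) = 0` for all `i, j`, the vectors `H_1(t), …, H_n(t)` form a basis of
`h(t)`, and `ω` vanishes identically on `h(t) × h(t)`. -/
theorem prop2_12_part2
    {V : Type*} [NormedAddCommGroup V] [NormedSpace ℝ V] [FiniteDimensional ℝ V]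
    {n : ℕ} (hn : 0 < n) (hdim : Module.finrank ℝ V = 2 * n)
    (ω : V →ₗ[ℝ] V →ₗ[ℝ] ℝ)
    (halt : ∀ v, ω v v = 0)
    (hnd : ∀ v, (∀ w, ω v w = 0) → v = 0)
    (A A' : ℝ → Fin n → V)
    (hA : ∀ i, ContDiff ℝ (⊤ : ℕ∞) (fun t => A t i))
    (hA' : ∀ i t, HasDerivAt (fun s => A s i) (A' t i) t)
    (hfan : ∀ t, LinearIndependent ℝ (Sum.elim (A t) (A' t)) ∧
      Submodule.span ℝ (Set.range (Sum.elim (A t) (A' t))) = ⊤)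
    (hLag : ∀ t i j, ω (A t i) (A t j) = 0)
    (F F' : ℝ → V →L[ℝ] V)
    (hF0 : ∀ t i, F t (A t i) = 0)
    (hF1 : ∀ t i, F t (A' t i) = A t i)
    (hFd : ∀ t, HasDerivAt F (F' t) t)
    (H : ℝ → Fin n → V)
    (hH : ∀ t i, H t i = (1/2 : ℝ) • (A' t i + F' t (A' t i))) :
    ∀ t, (∀ i j, ω (H t i) (H t j) = 0) ∧
      LinearIndependent ℝ (H t) ∧
      Submodule.span ℝ (Set.range (H t)) =
        LinearMap.ker (F' t - ContinuousLinearMap.id ℝ V).toLinearMap ∧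
      (∀ u ∈ LinearMap.ker (F' t - ContinuousLinearMap.id ℝ V).toLinearMap,
        ∀ v ∈ LinearMap.ker (F' t - ContinuousLinearMap.id ℝ V).toLinearMap, ω u v = 0) :=
  prop2_12_part2_general ω.toContinuousBilinearMap A A' hA' hLag F F'
    (fun t => ⟨⟨(hfan t).1, (hfan t).2⟩, hF0 t, hF1 t⟩) hFd H hH
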